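/- Let M ≥ 3 be an integer and 0 < p < 1/(64M²). Then ℙ_p(ξ : χ(ξ) < ∞) = 1 and ℙ_p(ξ : χ(ξ) = 0) > 0. -/

import Mathlib

open Filter Set MeasureTheory
open scoped ENNReal NNReal

namespace Paper

/-! ### Binary sequences and compatibility -/

/-- Delete the `i`-th entry of a sequence, shifting everything to the right of it
one step to the left. -/
def deleteAt {α : Type*} (ξ : ℕ → α) (i : ℕ) : ℕ → α :=
  fun j => if j < i then ξ j else ξ (j + 1)

/-- The annihilation operator `Δ_i^0` on binary sequences: delete the `i`-th digit
if it is a zero (`false`), otherwise do nothing. -/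
def delta0 (ξ : ℕ → Bool) (i : ℕ) : ℕ → Bool :=
  if ξ i = false then deleteAt ξ i else ξ

/-- The annihilation operator `Δ_i^1` on binary sequences: delete the `i`-th digit
if it is a one (`true`), otherwise do nothing. -/
def delta1 (ξ : ℕ → Bool) (i : ℕ) : ℕ → Bool :=
  if ξ i = true then deleteAt ξ i else ξ

/-- `Reach1 η η'` : `η'` is obtained from `η` by finitely many applications of
operators `Δ_·^1`. -/
def Reach1 : (ℕ → Bool) → (ℕ → Bool) → Prop :=
  Relation.ReflTransGen fun a b => ∃ i, b = delta1 a i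

/-- `Reach0 ξ ξ'` : `ξ'` is obtained from `ξ` by finitely many applications of
operators `Δ_·^0`. -/
def Reach0 : (ℕ → Bool) → (ℕ → Bool) → Prop :=
  Relation.ReflTransGen fun a b => ∃ i, b = delta0 a i

/-- Compatibility of an ordered pair of binary sequences: one can delete ones from `η`
and zeroes from `ξ` so that the resulting sequences converge (in the product topology)
to a common limit. -/
def Compatible (η ξ : ℕ → Bool) : Prop :=
  ∃ (ηs ξs : ℕ → ℕ → Bool) (l : ℕ → Bool),
    (∀ k, Reach1 η (ηs k)) ∧ (∀ k, Reach0 ξ (ξs k)) ∧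
      Tendsto ηs atTop (nhds l) ∧ Tendsto ξs atTop (nhds l)

/-- `μ` is the product Bernoulli measure on `{0,1}^ℕ` with parameter `p`. -/
def IsBernoulliProduct (μ : Measure (ℕ → Bool)) (p : ℝ) : Prop :=
  IsProbabilityMeasure μ ∧
    ∀ (s : Finset ℕ) (b : ℕ → Bool),
      μ {ξ | ∀ i ∈ s, ξ i = b i} = ∏ i ∈ s, ENNReal.ofReal (if b i then p else 1 - p)

/-- The set `Ξ_∞` of binary sequences with infinitely many ones and infinitely many
zeroes. -/
def Xinf (ξ : ℕ → Bool) : Prop :=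
  (∀ n, ∃ m, n ≤ m ∧ ξ m = true) ∧ ∀ n, ∃ m, n ≤ m ∧ ξ m = false

/-- Length of the run of ones of `ξ` starting at position `n` (junk value `0` if the
run is infinite). -/
noncomputable def runLen (ξ : ℕ → Bool) (n : ℕ) : ℕ :=
  letI := Classical.dec (∃ k, ξ (n + k) = false)
  if h : ∃ k, ξ (n + k) = false then Nat.find h else 0

/-- The position in `ξ` at which the `j`-th letter of the weighted word `f ξ` starts. -/
noncomputable def fpos (ξ : ℕ → Bool) : ℕ → ℕ
  | 0 => 0
  | j + 1 => fpos ξ j + max (runLen ξ (fpos ξ j)) 1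

/-- The run-length map `f : Ξ_∞ → Ψ`, replacing each maximal run of ones by a single
letter whose weight is the length of the run (zeroes being kept as letters of
weight `0`). -/
noncomputable def fmap (ξ : ℕ → Bool) : ℕ → ℕ :=
  fun j => runLen ξ (fpos ξ j)

/-! ### Weighted words -/

/-- The set `Ψ` of weighted words: a weight `≥ 1` is always followed by a weight `0`. -/
def Psi (ψ : ℕ → ℕ) : Prop := ∀ i, 1 ≤ ψ i → ψ (i + 1) = 0

/-- The annihilation operator `Δ_i^0` on weighted words. -/
def pdelta0 (ψ : ℕ → ℕ) (i : ℕ) : ℕ → ℕ :=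
  if ψ i ≠ 0 then ψ
  else if i = 0 ∨ ψ (i - 1) = 0 ∨ ψ (i + 1) = 0 then deleteAt ψ i
  else fun j => if j + 1 < i then ψ j else if j + 1 = i then ψ (i - 1) + ψ (i + 1) else ψ (j + 2)

/-- The annihilation operator `Δ_i^1` on weighted words. -/
def pdelta1 (ψ : ℕ → ℕ) (i : ℕ) : ℕ → ℕ :=
  if ψ i = 0 then ψ
  else if ψ i = 1 then deleteAt ψ i
  else Function.update ψ i (ψ i - 1)

/-- Finitely many applications of operators `Δ_·^1` on weighted words. -/
def PReach1 : (ℕ → ℕ) → (ℕ → ℕ) → Prop :=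
  Relation.ReflTransGen fun a b => ∃ i, b = pdelta1 a i

/-- Finitely many applications of operators `Δ_·^0` on weighted words. -/
def PReach0 : (ℕ → ℕ) → (ℕ → ℕ) → Prop :=
  Relation.ReflTransGen fun a b => ∃ i, b = pdelta0 a i

/-- Compatibility of an ordered pair of weighted words. -/
def CompatibleP (ζ ψ : ℕ → ℕ) : Prop :=
  ∃ (ζs ψs : ℕ → ℕ → ℕ) (l : ℕ → ℕ),
    (∀ k, PReach1 ζ (ζs k)) ∧ (∀ k, PReach0 ψ (ψs k)) ∧
      (∀ k, Psi (ζs k)) ∧ (∀ k, Psi (ψs k)) ∧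
      Tendsto ζs atTop (nhds l) ∧ Tendsto ψs atTop (nhds l)

/-! ### The oriented percolation process -/

/-- Oriented edges of the graph `G`: from `u` to `u + (0,1)` and from `u` to `u + (1,1)`. -/
def IsStep (u v : ℕ × ℕ) : Prop :=
  (v.1 = u.1 ∧ v.2 = u.2 + 1) ∨ (v.1 = u.1 + 1 ∧ v.2 = u.2 + 1)

/-- Open vertices of the configuration `ω_{ζ,ψ}`.  (Sequences are `0`-indexed in this
formalization, so the entry of `ζ` at the paper's position `v₁ ≥ 1` is `ζ (v₁ - 1)`.) -/
def OpenV (ζ ψ : ℕ → ℕ) (v : ℕ × ℕ) : Prop :=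
  v = (0, 0) ∨ (1 ≤ v.1 ∧ 1 ≤ v.2 ∧ ψ (v.2 - 1) ≤ ζ (v.1 - 1))

/-- Heavy vertices: `v₂ = 0`, or the row weight `ψ_{v₂}` is positive. -/
def Heavy (ψ : ℕ → ℕ) (v : ℕ × ℕ) : Prop := v.2 = 0 ∨ 1 ≤ ψ (v.2 - 1)

/-- `π 0, π 1, …, π n` is an open oriented path in `ω_{ζ,ψ}`. -/
def IsOpenPath (ζ ψ : ℕ → ℕ) (π : ℕ → ℕ × ℕ) (n : ℕ) : Prop :=
  (∀ i < n, IsStep (π i) (π (i + 1))) ∧ ∀ i ≤ n, OpenV ζ ψ (π i)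

/-- The path `π 0, …, π n` is permitted: any two distinct heavy vertices on it have
different first coordinates. -/
def IsPermitted (ψ : ℕ → ℕ) (π : ℕ → ℕ × ℕ) (n : ℕ) : Prop :=
  ∀ i ≤ n, ∀ j ≤ n, π i ≠ π j → Heavy ψ (π i) → Heavy ψ (π j) → (π i).1 ≠ (π j).1

/-- There is an infinite open permitted oriented path starting from the origin in the
percolation configuration `ω_{ζ,ψ}`. -/
def InfOpenPermitted (ζ ψ : ℕ → ℕ) : Prop :=
  ∃ π : ℕ → ℕ × ℕ, π 0 = (0, 0) ∧ (∀ n, IsStep (π n) (π (n + 1))) ∧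
    (∀ n, OpenV ζ ψ (π n)) ∧
    ∀ i j, π i ≠ π j → Heavy ψ (π i) → Heavy ψ (π j) → (π i).1 ≠ (π j).1

/-- `V_{⟨ζ,ψ⟩}(c)`: vertices in row `c` reachable from the origin by an open permitted
oriented path. -/
def Vset (ζ ψ : ℕ → ℕ) (c : ℕ) : Set (ℕ × ℕ) :=
  {v | v.2 = c ∧ ∃ (π : ℕ → ℕ × ℕ) (n : ℕ), π 0 = (0, 0) ∧ π n = v ∧
    IsOpenPath ζ ψ π n ∧ IsPermitted ψ π n}

/-- The open oriented cluster of the origin in `ω_{ζ,ψ}`. -/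
def ClusterO (ζ ψ : ℕ → ℕ) : Set (ℕ × ℕ) :=
  {v | ∃ (π : ℕ → ℕ × ℕ) (n : ℕ), π 0 = (0, 0) ∧ π n = v ∧ IsOpenPath ζ ψ π n}

/-- The horizontal slab `S_{[a,b]}`. -/
def Slab (a b : ℕ) : Set (ℕ × ℕ) := {v | a ≤ v.2 ∧ v.2 ≤ b}

/-- The horizontal discrete segment in row `c` with endpoints `a` and `b`. -/
def HSeg (c a b : ℕ) : Set (ℕ × ℕ) := {v | v.2 = c ∧ a ≤ v.1 ∧ v.1 ≤ b}

/-- The shift `θ_m`. -/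
def shiftSeq (m : ℕ) (ψ : ℕ → ℕ) : ℕ → ℕ := fun j => ψ (j + m)

/-- The hierarchical weighted word `ζ(L)`: the letter at the paper's position
`j ≥ 1` (Lean index `j - 1`) has weight `k` iff `L^k ∣ j` and `L^{k+1} ∤ j`. -/
noncomputable def zetaL (L : ℕ) : ℕ → ℕ := fun j => sSup {k | L ^ k ∣ j + 1}

/-- Lean indices at which `ψ` has an entry `≥ k`. -/
def idxSet (ψ : ℕ → ℕ) (k : ℕ) : Set ℕ := {n | k ≤ ψ n}

/-- `i_k(ψ)`: the first (1-based, as in the paper) position at which `ψ` has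
an entry `≥ k` (meaningful when `idxSet ψ k` is nonempty). -/
noncomputable def idx (ψ : ℕ → ℕ) (k : ℕ) : ℕ := sInf (idxSet ψ k) + 1

/-- Condition a) of being `M`-spaced. -/
def CondA (M : ℕ) (ψ : ℕ → ℕ) : Prop := ∀ i j : ℕ, i < j → M ^ min (ψ i) (ψ j) ≤ j - i

/-- `ψ ∈ Ψ_M^k` : `ψ` is `M`-spaced up to level `k`. -/
def SpacedUpTo (M k : ℕ) (ψ : ℕ → ℕ) : Prop :=
  Psi ψ ∧ CondA M ψ ∧ ∀ j, 1 ≤ j → j ≤ k → (idxSet ψ j).Nonempty → M ^ j ≤ idx ψ j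

/-- `ψ ∈ Ψ_M` : `ψ` is `M`-spaced. -/
def Spaced (M : ℕ) (ψ : ℕ → ℕ) : Prop :=
  Psi ψ ∧ CondA M ψ ∧ ∀ j, 1 ≤ j → (idxSet ψ j).Nonempty → M ^ j ≤ idx ψ j

/-! ### Discrete Hausdorff dimension (Barlow–Taylor) -/

/-- `ν_α(A, F)` with the normalizing diameter `dF` of `F` given explicitly; the
infimum is over countable covers of `A ∩ F` by integer intervals `[x, y)`. -/
noncomputable def nuBT (α : ℝ) (A F : Set ℤ) (dF : ℝ) : ℝ≥0∞ :=
  (⨅ (B : ℕ → ℤ × ℤ) (_ : A ∩ F ⊆ ⋃ i, Set.Ico (B i).1 (B i).2),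
      ∑' i, ENNReal.ofReal ((((B i).2 - (B i).1 : ℤ)) : ℝ) ^ α) /
    ENNReal.ofReal dF ^ α

/-- The annulus `I_n^{(r)}` (for `n ≥ 1`). -/
noncomputable def ringBT (r n : ℕ) : Set ℤ :=
  if n = 1 then Set.Ico (-(r : ℤ)) (r : ℤ)
  else Set.Ico (-((r : ℤ) ^ n)) ((r : ℤ) ^ n) \ Set.Ico (-((r : ℤ) ^ (n - 1))) ((r : ℤ) ^ (n - 1))

/-- `m_α^{(r)}(A) = ∑_{n ≥ 1} ν_α(A, I_n^{(r)})`. -/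
noncomputable def mBT (r : ℕ) (α : ℝ) (A : Set ℤ) : ℝ≥0∞ :=
  ∑' n : ℕ, nuBT α A (ringBT r (n + 1)) (2 * (r : ℝ) ^ (n + 1))

/-- The discrete (Barlow–Taylor) Hausdorff dimension of `A ⊆ ℤ`. -/
noncomputable def dimBT (r : ℕ) (A : Set ℤ) : ℝ :=
  sInf {α : ℝ | 0 < α ∧ mBT r α A < ⊤}

/-- The set of zeroes of a binary sequence, viewed inside `ℤ` (at the paper's
positions `1, 2, …`). -/
def zeroSetZ (η : ℕ → Bool) : Set ℤ := {i : ℤ | ∃ n : ℕ, i = (n : ℤ) + 1 ∧ η n = false}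

/-! ### The grouping construction -/

/-- A cluster together with its mass. -/
abbrev Clu : Type := Set ℕ × ℕ

/-- The set of (paper, i.e. 1-based) positions of the ones of `ξ`. -/
def Gamma (ξ : ℕ → Bool) : Set ℕ := {n | 1 ≤ n ∧ ξ (n - 1) = true}

/-- The span of a set: the smallest interval containing it. -/
noncomputable def spanI (C : Set ℕ) : Set ℕ := Set.Icc (sInf C) (sSup C)

/-- Euclidean distance between two sets of integers. -/
noncomputable def cluDist (C D : Set ℕ) : ℕ := sInf {d | ∃ a ∈ C, ∃ b ∈ D, d = Nat.dist a b}

/-- Diameter of a set of integers. -/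
noncomputable def sdiam (C : Set ℕ) : ℕ := sSup {d | ∃ a ∈ C, ∃ b ∈ C, d = Nat.dist a b}

/-- `C` lies entirely to the left of `D`. -/
def cluLT (C D : Set ℕ) : Prop := ∀ a ∈ C, ∀ b ∈ D, a < b

/-- `p` and `q` are adjacent clusters of the collection `B` (no cluster of `B` lies
strictly between them) at distance `< t`. -/
def adjStep (B : Set Clu) (t : ℕ) (p q : Clu) : Prop :=
  p ∈ B ∧ q ∈ B ∧ cluDist p.1 q.1 < t ∧
    ((cluLT p.1 q.1 ∧ ∀ r ∈ B, ¬(cluLT p.1 r.1 ∧ cluLT r.1 q.1)) ∨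
      (cluLT q.1 p.1 ∧ ∀ r ∈ B, ¬(cluLT q.1 r.1 ∧ cluLT r.1 p.1)))

/-- The maximal run (within the collection `B`, with gap threshold `t`) containing `p`. -/
def runOf (B : Set Clu) (t : ℕ) (p : Clu) : Set Clu :=
  {q ∈ B | Relation.ReflTransGen (adjStep B t) p q}

/-- `R` is a maximal run of length `≥ 2` of clusters of `B` with gap threshold `t`. -/
def IsRun (B : Set Clu) (t : ℕ) (R : Set Clu) : Prop :=
  ∃ p ∈ B, R = runOf B t p ∧ ∃ q ∈ R, q ≠ p

/-- The level-`(k+1)` cluster created from a maximal `(k+1)`-run `R`: its point set is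
`span(R) ∩ Γ`, and its mass is `∑ m(constituents) - k (n - 1)`. -/
noncomputable def runClu (Γ : Set ℕ) (k : ℕ) (R : Set Clu) : Clu :=
  (spanI (⋃ q ∈ R, q.1) ∩ Γ, (∑ᶠ q ∈ R, q.2) - k * (Nat.card R - 1))

/-- One step of the grouping construction: from the partition `𝐂_k` to `𝐂_{k+1}`. -/
noncomputable def nextPart (Γ : Set ℕ) (M k : ℕ) (S : Set Clu) : Set Clu :=
  {c | ∃ R, IsRun {q ∈ S | k + 1 ≤ q.2} (M ^ (k + 1)) R ∧ c = runClu Γ k R} ∪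
    {c ∈ S | ∀ R, IsRun {q ∈ S | k + 1 ≤ q.2} (M ^ (k + 1)) R →
      Disjoint c.1 (spanI (⋃ q ∈ R, q.1))}

/-- The partition `𝐂_k` of `Γ` into clusters with masses (grouping construction with
spacing parameter `M`). -/
noncomputable def parts (Γ : Set ℕ) (M : ℕ) : ℕ → Set Clu
  | 0 => {c | ∃ x ∈ Γ, c = ({x}, 1)}
  | k + 1 => nextPart Γ M k (parts Γ M k)

/-- `c` is a cluster of level `ℓ`: it appears in `𝐂_ℓ` and in no earlier partition. -/
def IsLevelCluster (Γ : Set ℕ) (M ℓ : ℕ) (c : Clu) : Prop :=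
  c ∈ parts Γ M ℓ ∧ ∀ k < ℓ, c ∉ parts Γ M k

/-- `κ(x) < ∞` : the levels of the clusters containing `x` are bounded. -/
def KappaFinite (Γ : Set ℕ) (M : ℕ) (x : ℕ) : Prop :=
  BddAbove {ℓ | ∃ c : Clu, IsLevelCluster Γ M ℓ c ∧ x ∈ c.1}

/-- The event `Ξ(p)` on which the grouping construction is well set:
`κ(x) < ∞` for every `x ∈ Γ(ξ)`. -/
def GoodSeq (M : ℕ) (ξ : ℕ → Bool) : Prop := ∀ x ∈ Gamma ξ, KappaFinite (Gamma ξ) M x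

/-- The collection `𝐂_∞` of maximal clusters: those that stay in `𝐂_k` forever. -/
def maxClusters (Γ : Set ℕ) (M : ℕ) : Set Clu :=
  {c | ∃ ℓ, ∀ k, ℓ ≤ k → c ∈ parts Γ M k}

/-- The defining condition of `χ(ξ) ≤ k` : every maximal cluster of mass `> k`
is at distance `≥ M^{mass}` from the origin.  (Positions are 1-based, so the distance
from a cluster to `0` is its smallest element.) -/
def ChiCond (Γ : Set ℕ) (M k : ℕ) : Prop :=
  ∀ c ∈ maxClusters Γ M, k < c.2 → M ^ c.2 ≤ sInf c.1

/-- The maximal cluster containing a given point (junk if there is none). -/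
noncomputable def maxCluOf (Γ : Set ℕ) (M : ℕ) (x : ℕ) : Clu :=
  letI := Classical.dec (∃ c : Clu, c ∈ maxClusters Γ M ∧ x ∈ c.1)
  if h : ∃ c : Clu, c ∈ maxClusters Γ M ∧ x ∈ c.1 then h.choose else (∅, 0)

/-- Enumeration of the maximal clusters in increasing order, together with the union
of those already enumerated. -/
noncomputable def enumAux (Γ : Set ℕ) (M : ℕ) : ℕ → Clu × Set ℕ
  | 0 => (maxCluOf Γ M (sInf Γ), (maxCluOf Γ M (sInf Γ)).1)
  | j + 1 =>
    (maxCluOf Γ M (sInf (Γ \ (enumAux Γ M j).2)),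
      (enumAux Γ M j).2 ∪ (maxCluOf Γ M (sInf (Γ \ (enumAux Γ M j).2))).1)

/-- The `j`-th maximal cluster `C_{∞,j}` (`j` is 0-based here). -/
noncomputable def enumClu (Γ : Set ℕ) (M : ℕ) (j : ℕ) : Clu := (enumAux Γ M j).1

/-- The start-point `x̂_j` of the `j`-th maximal cluster (`j` is 0-based here). -/
noncomputable def hatx (Γ : Set ℕ) (M : ℕ) : ℕ → ℕ
  | 0 => sInf Γ
  | j + 1 => sInf (Γ \ (enumAux Γ M j).2)

/-- The (1-based) position `x̂_j - ∑_{t<j} diam(C_{∞,t})` at which the entry of the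
`j`-th maximal cluster sits in the weighted word `ψ^ξ`. -/
noncomputable def cluPos (Γ : Set ℕ) (M : ℕ) (j : ℕ) : ℕ :=
  hatx Γ M j - ∑ t ∈ Finset.range j, sdiam (enumClu Γ M t).1

/-- The weighted word `ψ^ξ` associated to `ξ` by the grouping construction. -/
noncomputable def psiXi (M : ℕ) (ξ : ℕ → Bool) : ℕ → ℕ := fun i =>
  letI := Classical.dec (∃ j : ℕ, i + 1 = cluPos (Gamma ξ) M j)
  if h : ∃ j : ℕ, i + 1 = cluPos (Gamma ξ) M j then (enumClu (Gamma ξ) M h.choose).2 else 0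

/-- `ψ ⪯_M ζ`. -/
def PrecM (M : ℕ) (ψ ζ : ℕ → ℕ) : Prop :=
  ∀ j, (ψ j = 0 ↔ ζ j = 0) ∧ (1 ≤ ψ j → ψ j ≤ ζ j ∧ ζ j ≤ 3 * M ^ (ψ j - 1))

/-- The set `∪_i (span(C_{∞,i}) \ C_{∞,i})` of points to be deleted. -/
def Dset (Γ : Set ℕ) (M : ℕ) : Set ℕ := ⋃ c ∈ maxClusters Γ M, spanI c.1 \ c.1

/-- `j_n(ξ)` : the `n`-th (0-based) element of `Dset`, shifted by `n` to account for
the previous deletions (this is the paper's `j_{n+1}`, a 1-based position). -/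
noncomputable def jseq (Γ : Set ℕ) (M : ℕ) (n : ℕ) : ℕ := Nat.nth (· ∈ Dset Γ M) n - n

/-- The iterates `ξ^{(n)}` obtained by successively deleting the zeroes of `ξ`
lying inside spans of maximal clusters. -/
noncomputable def xiIter (M : ℕ) (ξ : ℕ → Bool) : ℕ → ℕ → Bool
  | 0 => ξ
  | n + 1 => delta0 (xiIter M ξ n) (jseq (Gamma ξ) M n - 1)

/-- The fattened hierarchical weighted word `ζ̃(L)` (with `M = 3(L+1)`). -/
noncomputable def tzeta (L : ℕ) : ℕ → ℕ := fun j =>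
  if zetaL L j = 0 then 0 else 3 * (3 * (L + 1)) ^ (zetaL L j - 1)

/-- `|A ∩ [0, n)|` for `A ⊆ ℕ`. -/
noncomputable def massCount (A : Set ℕ) (n : ℕ) : ℕ := Nat.card {a : ℕ | a ∈ A ∧ a < n}

/-! ### Certificates -/

inductive Chain (M k : ℕ) (Q : ℕ → ℕ → Finset ℕ → Prop) : ℕ → ℕ → Finset ℕ → Prop
  | base (m x : ℕ) (S : Finset ℕ) (hm : k + 1 ≤ m) (hQ : Q m x S) : Chain M k Q m x S
  | step (m₁ m₂ m x x₂ : ℕ) (S₁ S₂ : Finset ℕ) (h₁ : Chain M k Q m₁ x S₁)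
      (hm : k + 1 ≤ m₂) (h₂ : Q m₂ x₂ S₂) (hlt : S₁.sup id < x₂)
      (hgap : x₂ < S₁.sup id + M ^ (k + 1)) (hmass : m + k = m₁ + m₂) :
      Chain M k Q m x (S₁ ∪ S₂)

def Cert (M : ℕ) : ℕ → ℕ → ℕ → Finset ℕ → Prop
  | 0 => fun m x S => m = 1 ∧ S = {x}
  | k + 1 => fun m x S => Cert M k m x S ∨ Chain M k (Cert M k) m x S

theorem Chain.mass_ge {M k : ℕ} {Q : ℕ → ℕ → Finset ℕ → Prop} {m x : ℕ} {S : Finset ℕ}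
    (h : Chain M k Q m x S) : k + 1 ≤ m := by
  induction h with
  | base => assumption
  | step => omega

theorem Chain.ge {M k : ℕ} {Q : ℕ → ℕ → Finset ℕ → Prop}
    (hQ : ∀ m x S, Q m x S → x ∈ S ∧ ∀ i ∈ S, x ≤ i) {m x : ℕ} {S : Finset ℕ}
    (h : Chain M k Q m x S) : x ∈ S ∧ ∀ i ∈ S, x ≤ i := by
  induction h with
  | base m x S hm h => exact hQ _ _ _ h
  | step m₁ m₂ m x x₂ S₁ S₂ h₁ hm h₂ hlt hgap hmass ih =>
    refine ⟨Finset.mem_union_left _ ih.1, fun i hi => ?_⟩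
    rcases Finset.mem_union.1 hi with hi | hi
    · exact ih.2 i hi
    · have h1 := (hQ _ _ _ h₂).2 i hi
      have h2 : x ≤ S₁.sup id := Finset.le_sup (f := id) ih.1
      omega

theorem Cert.ge {M : ℕ} (k : ℕ) : ∀ m x S, Cert M k m x S → x ∈ S ∧ ∀ i ∈ S, x ≤ i := by
  induction k with
  | zero =>
    rintro m x S ⟨-, rfl⟩
    simp
  | succ k ih =>
    rintro m x S (h | h)
    · exact ih m x S h
    · exact h.ge ih

noncomputable def wt (p : ℝ) (A : Set (Finset ℕ)) : ℝ≥0∞ :=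
  ∑' S : A, ENNReal.ofReal p ^ (S : Finset ℕ).card

theorem wt_mono (p : ℝ) {A B : Set (Finset ℕ)} (h : A ⊆ B) : wt p A ≤ wt p B :=
  ENNReal.tsum_mono_subtype (fun S : Finset ℕ => ENNReal.ofReal p ^ S.card) h

theorem wt_union (p : ℝ) (A B : Set (Finset ℕ)) : wt p (A ∪ B) ≤ wt p A + wt p B :=
  ENNReal.tsum_union_le (fun S : Finset ℕ => ENNReal.ofReal p ^ S.card) A B

theorem wt_biUnion (p : ℝ) {ι : Type} (s : Finset ι) (A : ι → Set (Finset ℕ)) :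
    wt p (⋃ i ∈ s, A i) ≤ ∑ i ∈ s, wt p (A i) :=
  ENNReal.tsum_biUnion_le (fun S : Finset ℕ => ENNReal.ofReal p ^ S.card) s A

theorem wt_image_union (p : ℝ) (S₁ : Finset ℕ) (B : Set (Finset ℕ))
    (hB : ∀ S₂ ∈ B, Disjoint S₁ S₂) :
    wt p (Set.image (fun S₂ => S₁ ∪ S₂) B) ≤ ENNReal.ofReal p ^ S₁.card * wt p B := by
  have hinj : Set.InjOn (fun S₂ => S₁ ∪ S₂) B := by
    intro S₂ h₂ S₃ h₃ h
    have e2 : S₂ = (S₁ ∪ S₂) \ S₁ := by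
      rw [Finset.union_sdiff_left, Finset.sdiff_eq_self_of_disjoint (hB _ h₂).symm]
    have e3 : S₃ = (S₁ ∪ S₃) \ S₁ := by
      rw [Finset.union_sdiff_left, Finset.sdiff_eq_self_of_disjoint (hB _ h₃).symm]
    rw [e2, e3]
    exact congrArg (fun T => T \ S₁) h
  unfold wt
  rw [tsum_image (fun S : Finset ℕ => ENNReal.ofReal p ^ S.card) hinj, ← ENNReal.tsum_mul_left]
  refine ENNReal.tsum_le_tsum fun S => ?_
  rw [Finset.card_union_of_disjoint (hB _ S.2), pow_add]

theorem wt_prod (p : ℝ) (A : Set (Finset ℕ)) (B : Finset ℕ → Set (Finset ℕ)) (b : ℝ≥0∞)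
    (hd : ∀ S₁ ∈ A, ∀ S₂ ∈ B S₁, Disjoint S₁ S₂) (hb : ∀ S₁ ∈ A, wt p (B S₁) ≤ b) :
    wt p {S | ∃ S₁ ∈ A, ∃ S₂ ∈ B S₁, S = S₁ ∪ S₂} ≤ wt p A * b := by
  have hsub : {S | ∃ S₁ ∈ A, ∃ S₂ ∈ B S₁, S = S₁ ∪ S₂} ⊆
      ⋃ S₁ : A, Set.image (fun S₂ => (S₁ : Finset ℕ) ∪ S₂) (B S₁) := by
    rintro S ⟨S₁, h₁, S₂, h₂, rfl⟩
    exact Set.mem_iUnion.2 ⟨⟨S₁, h₁⟩, S₂, h₂, rfl⟩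
  refine (wt_mono p hsub).trans ?_
  have h1 : wt p (⋃ S₁ : A, Set.image (fun S₂ => (S₁ : Finset ℕ) ∪ S₂) (B S₁)) ≤
      ∑' S₁ : A, wt p (Set.image (fun S₂ => (S₁ : Finset ℕ) ∪ S₂) (B S₁)) :=
    ENNReal.tsum_iUnion_le_tsum (fun S : Finset ℕ => ENNReal.ofReal p ^ S.card) _
  refine h1.trans ?_
  rw [wt, ← ENNReal.tsum_mul_right]
  refine ENNReal.tsum_le_tsum fun S₁ => ?_
  refine (wt_image_union p S₁ _ (hd _ S₁.2)).trans ?_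
  gcongr
  exact hb _ S₁.2

theorem wt_chain (M k : ℕ) (hM : 3 ≤ M) (p t : ℝ) (ht : 0 ≤ t)
    (Q : ℕ → ℕ → Finset ℕ → Prop)
    (hQ : ∀ m x S, Q m x S → x ∈ S ∧ ∀ i ∈ S, x ≤ i)
    (hW : ∀ m x, wt p {S | Q m x S} ≤ ENNReal.ofReal (t ^ m / (M : ℝ) ^ (m + 1))) :
    ∀ j x, wt p {S | Chain M k Q (k + 1 + j) x S} ≤
      ENNReal.ofReal (t ^ (k + 1 + j) / (M : ℝ) ^ (k + 1 + j + 1) * (1 + t ^ k) ^ j) := by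
  have hM0 : (0 : ℝ) < M := by exact_mod_cast (by omega : 0 < M)
  intro j
  induction j using Nat.strong_induction_on with
  | _ j ih =>
  intro x
  let P : ℕ → Set (Finset ℕ) := fun i =>
    {S | ∃ S₁ ∈ {S | Chain M k Q (k + 1 + i) x S},
      ∃ S₂ ∈ (⋃ x₂ ∈ Finset.Ioo (S₁.sup id) (S₁.sup id + M ^ (k + 1)),
        {S | Q (k + j - i) x₂ S}), S = S₁ ∪ S₂}
  have hsub : {S | Chain M k Q (k + 1 + j) x S} ⊆
      {S | Q (k + 1 + j) x S} ∪ ⋃ i ∈ Finset.range j, P i := by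
    intro S hS
    cases hS with
    | base _ _ _ hm h => exact Or.inl h
    | step m₁ m₂ _ _ x₂ S₁ S₂ h₁ hm h₂ hlt hgap hmass =>
      right
      have hm1 := h₁.mass_ge
      simp only [Set.mem_iUnion, Finset.mem_range]
      refine ⟨m₁ - (k + 1), by omega, S₁, ?_, S₂, ?_, rfl⟩
      · have : k + 1 + (m₁ - (k + 1)) = m₁ := by omega
        simpa [this] using h₁
      · simp only [Set.mem_iUnion, Finset.mem_Ioo]
        refine ⟨x₂, ⟨hlt, hgap⟩, ?_⟩
        have : k + j - (m₁ - (k + 1)) = m₂ := by omega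
        simpa [this] using h₂
  have hP : ∀ i ∈ Finset.range j, wt p (P i) ≤
      ENNReal.ofReal (t ^ (k + 1 + j) / (M : ℝ) ^ (k + 1 + j + 1) * (t ^ k * (1 + t ^ k) ^ i)) := by
    intro i hi
    rw [Finset.mem_range] at hi
    have hb : ∀ S₁ ∈ {S | Chain M k Q (k + 1 + i) x S},
        wt p (⋃ x₂ ∈ Finset.Ioo (S₁.sup id) (S₁.sup id + M ^ (k + 1)),
        {S | Q (k + j - i) x₂ S}) ≤
        ENNReal.ofReal ((M : ℝ) ^ (k + 1) * (t ^ (k + j - i) / (M : ℝ) ^ (k + j - i + 1))) := by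
      intro S₁ _
      refine (wt_biUnion p _ _).trans ?_
      refine (Finset.sum_le_sum fun x₂ _ => hW (k + j - i) x₂).trans ?_
      rw [Finset.sum_const, nsmul_eq_mul, ENNReal.ofReal_mul (by positivity)]
      gcongr
      rw [Nat.card_Ioo, ENNReal.ofReal_pow hM0.le, ENNReal.ofReal_natCast]
      exact_mod_cast (by omega)
    refine (wt_prod p _ _ _ ?_ hb).trans ?_
    · intro S₁ h₁ S₂ h₂
      simp only [Set.mem_iUnion, Finset.mem_Ioo] at h₂
      obtain ⟨x₂, ⟨hlt, -⟩, h₂⟩ := h₂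
      rw [Finset.disjoint_left]
      intro a ha ha2
      have h1 : a ≤ S₁.sup id := Finset.le_sup (f := id) ha
      have h2 := (hQ _ _ _ h₂).2 a ha2
      omega
    · refine (mul_le_mul_left (ih i hi x) _).trans ?_
      rw [← ENNReal.ofReal_mul (by positivity)]
      apply ENNReal.ofReal_le_ofReal
      obtain ⟨d, rfl⟩ : ∃ d, j = i + 1 + d := ⟨j - (i + 1), by omega⟩
      have : k + (i + 1 + d) - i = k + 1 + d := by omega
      rw [this]
      apply le_of_eq
      field_simp
      ring
  refine (wt_mono p hsub).trans ((wt_union p _ _).trans ?_)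
  refine (add_le_add (hW _ x) ((wt_biUnion p _ _).trans (Finset.sum_le_sum hP))).trans ?_
  rw [← ENNReal.ofReal_sum_of_nonneg (fun i _ => by positivity),
    ← ENNReal.ofReal_add (by positivity) (Finset.sum_nonneg fun i _ => by positivity)]
  apply ENNReal.ofReal_le_ofReal
  apply le_of_eq
  rw [← Finset.mul_sum, ← Finset.mul_sum]
  have hg := mul_geom_sum (1 + t ^ k) j
  rw [add_sub_cancel_left] at hg
  rw [hg]
  ring

noncomputable def TT (k : ℕ) : ℝ := (1 / 16) * (1 - 3 / 4 * (1 / 2) ^ k)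

theorem TT_nonneg (k : ℕ) : 0 ≤ TT k := by
  have : ((1 : ℝ) / 2) ^ k ≤ 1 := pow_le_one₀ (by norm_num) (by norm_num)
  unfold TT
  linarith

theorem TT_le (k : ℕ) : TT k ≤ 1 / 16 := by
  have : (0 : ℝ) ≤ (1 / 2) ^ k := by positivity
  unfold TT
  linarith

theorem TT_step (k : ℕ) : TT k * (1 + TT k ^ k) ≤ TT (k + 1) := by
  rcases Nat.eq_zero_or_pos k with rfl | hk
  · norm_num [TT]
  · have h1 : TT k ^ k ≤ (1 / 16) ^ k := pow_le_pow_left₀ (TT_nonneg k) (TT_le k) k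
    have h2 : TT k * TT k ^ k ≤ 1 / 16 * (1 / 16) ^ k :=
      mul_le_mul (TT_le k) h1 (pow_nonneg (TT_nonneg k) k) (by norm_num)
    have h3 : ((1 : ℝ) / 16) ^ k = (1 / 8) ^ k * (1 / 2) ^ k := by
      rw [← mul_pow]; norm_num
    have h4 : ((1 : ℝ) / 8) ^ k ≤ 1 / 8 := by
      simpa using pow_le_pow_of_le_one (by norm_num : (0 : ℝ) ≤ 1 / 8) (by norm_num) hk
    have h5 : (0 : ℝ) ≤ (1 / 2) ^ k := by positivity
    have h6 : TT (k + 1) = TT k + 1 / 16 * (3 / 8) * (1 / 2) ^ k := by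
      unfold TT; ring
    rw [h6]
    nlinarith

theorem wt_cert (M : ℕ) (hM : 3 ≤ M) (p : ℝ) (hp0 : 0 < p) (hp : p < 1 / (64 * (M : ℝ) ^ 2))
    (k : ℕ) : ∀ m x, wt p {S | Cert M k m x S} ≤
      ENNReal.ofReal (TT k ^ m / (M : ℝ) ^ (m + 1)) := by
  have hM0 : (0 : ℝ) < M := by exact_mod_cast (by omega : 0 < M)
  induction k with
  | zero =>
    intro m x
    by_cases hm : m = 1
    · subst hm
      have : {S : Finset ℕ | Cert M 0 1 x S} = {{x}} := by
        ext S; simp [Cert]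
      rw [this]
      unfold wt
      rw [tsum_singleton ({x} : Finset ℕ) (fun S : Finset ℕ => ENNReal.ofReal p ^ S.card)]
      simp only [Finset.card_singleton, pow_one]
      apply ENNReal.ofReal_le_ofReal
      have : TT 0 / (M : ℝ) ^ (1 + 1) = 1 / (64 * (M : ℝ) ^ 2) := by
        have h0 : TT 0 = 1 / 64 := by norm_num [TT]
        rw [h0, div_div]
      rw [this]
      exact hp.le
    · have : {S : Finset ℕ | Cert M 0 m x S} = ∅ := by
        ext S; simp [Cert, hm]
      rw [this]
      simp [wt]
  | succ k ih =>
    intro m x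
    have ht := TT_nonneg k
    have hstep := TT_step k
    have hge : TT k ≤ TT (k + 1) := by
      have := pow_nonneg ht k
      nlinarith
    by_cases hm : k + 1 ≤ m
    · obtain ⟨j, rfl⟩ := Nat.exists_eq_add_of_le hm
      have hsub : {S : Finset ℕ | Cert M (k + 1) (k + 1 + j) x S} ⊆
          {S | Chain M k (Cert M k) (k + 1 + j) x S} := by
        rintro S (h | h)
        · exact Chain.base _ _ _ (by omega) h
        · exact h
      refine (wt_mono p hsub).trans ((wt_chain M k hM p _ ht _ (Cert.ge k) ih j x).trans ?_)
      apply ENNReal.ofReal_le_ofReal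
      rw [div_mul_eq_mul_div]
      gcongr
      calc TT k ^ (k + 1 + j) * (1 + TT k ^ k) ^ j
          ≤ TT k ^ (k + 1 + j) * (1 + TT k ^ k) ^ (k + 1 + j) := by
            gcongr
            · have := pow_nonneg ht k
              linarith
            · omega
        _ = (TT k * (1 + TT k ^ k)) ^ (k + 1 + j) := (mul_pow _ _ _).symm
        _ ≤ TT (k + 1) ^ (k + 1 + j) := by
            have := pow_nonneg ht k
            exact pow_le_pow_left₀ (by positivity) hstep _
    · have hsub : {S : Finset ℕ | Cert M (k + 1) m x S} ⊆ {S | Cert M k m x S} := by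
        rintro S (h | h)
        · exact h
        · exact absurd h.mass_ge hm
      refine (wt_mono p hsub).trans ((ih m x).trans ?_)
      apply ENNReal.ofReal_le_ofReal
      gcongr

/-- There is a certificate of mass `m` starting at `x` inside `Γ(ξ)`. -/
def HasCert (M m x : ℕ) (ξ : ℕ → Bool) (k : ℕ) : Prop :=
  ∃ S, Cert M k m x S ∧ (S : Set ℕ) ⊆ Gamma ξ

theorem meas_sub (p : ℝ) (μ : Measure (ℕ → Bool)) (hμ : IsBernoulliProduct μ p) (S : Finset ℕ) :
    μ {ξ | (S : Set ℕ) ⊆ Gamma ξ} ≤ ENNReal.ofReal p ^ S.card := by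
  by_cases h0 : 0 ∈ S
  · have : {ξ : ℕ → Bool | (S : Set ℕ) ⊆ Gamma ξ} = ∅ := by
      ext ξ
      simp only [Set.mem_ofPred_eq, Set.mem_empty_iff_false, iff_false]
      intro h
      have := (h h0).1
      omega
    rw [this]; simp
  · have hpos : ∀ i ∈ S, 1 ≤ i := by
      intro i hi
      rcases Nat.eq_zero_or_pos i with rfl | h
      · exact absurd hi h0
      · exact h
    have hc : (S.image (fun i => i - 1)).card = S.card := by
      apply Finset.card_image_of_injOn
      intro a ha b hb hab
      have := hpos a ha
      have := hpos b hb
      simp only at hab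
      omega
    have h2 := hμ.2 (S.image (fun i => i - 1)) (fun _ => true)
    simp only [if_true, Finset.prod_const, hc] at h2
    rw [← h2]
    apply measure_mono
    intro ξ h i hi
    obtain ⟨a, ha, rfl⟩ := Finset.mem_image.1 hi
    exact (h ha).2

theorem meas_cert (M : ℕ) (hM : 3 ≤ M) (p : ℝ) (hp0 : 0 < p) (hp : p < 1 / (64 * (M : ℝ) ^ 2))
    (μ : Measure (ℕ → Bool)) (hμ : IsBernoulliProduct μ p) (m x : ℕ) :
    μ {ξ | ∃ k, HasCert M m x ξ k} ≤ ENNReal.ofReal ((1 / 16) ^ m / (M : ℝ) ^ (m + 1)) := by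
  have hM0 : (0 : ℝ) < M := by exact_mod_cast (by omega : 0 < M)
  rw [Set.ofPred_exists]
  have hmono : Monotone fun k => {ξ | HasCert M m x ξ k} := by
    apply monotone_nat_of_le_succ
    rintro k ξ ⟨S, hS, h⟩
    exact ⟨S, Or.inl hS, h⟩
  rw [hmono.measure_iUnion]
  refine iSup_le fun k => ?_
  have hsub : {ξ | HasCert M m x ξ k} ⊆
      ⋃ S : {S | Cert M k m x S}, {ξ | ((S : Finset ℕ) : Set ℕ) ⊆ Gamma ξ} := by
    rintro ξ ⟨S, hS, h⟩
    exact Set.mem_iUnion.2 ⟨⟨S, hS⟩, h⟩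
  refine (measure_mono hsub).trans ((measure_iUnion_le _).trans ?_)
  refine (ENNReal.tsum_le_tsum fun S : {S | Cert M k m x S} => meas_sub p μ hμ S.1).trans ?_
  refine (wt_cert M hM p hp0 hp k m x).trans ?_
  apply ENNReal.ofReal_le_ofReal
  have := TT_nonneg k
  have := TT_le k
  gcongr

def Bad (M m : ℕ) : Set (ℕ → Bool) := {ξ | ∃ x < M ^ m, ∃ k, HasCert M m x ξ k}

theorem meas_bad (M : ℕ) (hM : 3 ≤ M) (p : ℝ) (hp0 : 0 < p) (hp : p < 1 / (64 * (M : ℝ) ^ 2))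
    (μ : Measure (ℕ → Bool)) (hμ : IsBernoulliProduct μ p) (m : ℕ) :
    μ (Bad M m) ≤ ENNReal.ofReal ((1 / 16) ^ m / 3) := by
  have hM0 : (0 : ℝ) < M := by exact_mod_cast (by omega : 0 < M)
  have hM3 : (3 : ℝ) ≤ M := by exact_mod_cast hM
  have hsub : Bad M m ⊆ ⋃ x ∈ Finset.range (M ^ m), {ξ | ∃ k, HasCert M m x ξ k} := by
    rintro ξ ⟨x, hx, h⟩
    simp only [Set.mem_iUnion, Finset.mem_range]
    exact ⟨x, hx, h⟩
  refine (measure_mono hsub).trans ((measure_biUnion_finset_le _ _).trans ?_)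
  refine (Finset.sum_le_sum fun x _ => meas_cert M hM p hp0 hp μ hμ m x).trans ?_
  rw [Finset.sum_const, nsmul_eq_mul, Finset.card_range, ← ENNReal.ofReal_natCast,
    ← ENNReal.ofReal_mul (by positivity)]
  apply ENNReal.ofReal_le_ofReal
  push_cast
  have : (M : ℝ) ^ m * ((1 / 16) ^ m / (M : ℝ) ^ (m + 1)) = (1 / 16) ^ m / M := by
    rw [pow_succ]; field_simp
  rw [this]
  gcongr

/-! ### Deterministic part -/

theorem sInf_mem_clu {C : Set ℕ} (h : C.Nonempty) : sInf C ∈ C := Nat.sInf_mem h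

theorem sSup_mem_clu {C : Set ℕ} (h : C.Nonempty) (hf : C.Finite) : sSup C ∈ C :=
  Nat.sSup_mem h hf.bddAbove

theorem le_sSup_clu {C : Set ℕ} (hf : C.Finite) {a : ℕ} (ha : a ∈ C) : a ≤ sSup C :=
  le_csSup hf.bddAbove ha

theorem cluLT_asymm {C D : Set ℕ} (hC : C.Nonempty) (hD : D.Nonempty) (h : cluLT C D)
    (h' : cluLT D C) : False := by
  obtain ⟨a, ha⟩ := hC
  obtain ⟨b, hb⟩ := hD
  have := h a ha b hb
  have := h' b hb a ha
  omega

/-- Well-ordered collections of clusters. -/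
def OrdFam (B : Set Clu) : Prop :=
  (∀ q ∈ B, q.1.Nonempty ∧ q.1.Finite) ∧
    ∀ q ∈ B, ∀ r ∈ B, q ≠ r → cluLT q.1 r.1 ∨ cluLT r.1 q.1

theorem adjStep_symm {B : Set Clu} {t : ℕ} {p q : Clu} (h : adjStep B t p q) :
    adjStep B t q p := by
  obtain ⟨h1, h2, h3, h4⟩ := h
  refine ⟨h2, h1, ?_, h4.symm⟩
  have : {d | ∃ a ∈ q.1, ∃ b ∈ p.1, d = Nat.dist a b} =
      {d | ∃ a ∈ p.1, ∃ b ∈ q.1, d = Nat.dist a b} := by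
    ext d
    constructor
    · rintro ⟨a, ha, b, hb, rfl⟩
      exact ⟨b, hb, a, ha, Nat.dist_comm _ _⟩
    · rintro ⟨a, ha, b, hb, rfl⟩
      exact ⟨b, hb, a, ha, Nat.dist_comm _ _⟩
  unfold cluDist at h3 ⊢
  rwa [this]

theorem reach_symm {B : Set Clu} {t : ℕ} {p q : Clu}
    (h : Relation.ReflTransGen (adjStep B t) p q) :
    Relation.ReflTransGen (adjStep B t) q p := by
  induction h with
  | refl => exact .refl
  | tail _ h2 ih => exact .head (adjStep_symm h2) ih

theorem reach_mem {B : Set Clu} {t : ℕ} {p q : Clu} (hp : p ∈ B)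
    (h : Relation.ReflTransGen (adjStep B t) p q) : q ∈ B := by
  induction h with
  | refl => exact hp
  | tail _ h2 _ => exact h2.2.1

theorem reach_succ {B : Set Clu} (hB : OrdFam B) {t : ℕ} {q z : Clu} (hq : q ∈ B)
    (h : Relation.ReflTransGen (adjStep B t) q z) :
    z = q ∨ cluLT z.1 q.1 ∨ ∃ b, adjStep B t q b ∧ cluLT q.1 b.1 := by
  induction h with
  | refl => exact Or.inl rfl
  | @tail z w h1 h2 ih =>
    by_cases hw : w = q
    · exact Or.inl hw
    rcases hB.2 w h2.2.1 q hq hw with hlt | hgt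
    · exact Or.inr (Or.inl hlt)
    rcases ih with rfl | ih | ih
    · exact Or.inr (Or.inr ⟨w, h2, hgt⟩)
    · exfalso
      rcases h2.2.2.2 with h | h
      · exact h.2 q hq ⟨ih, hgt⟩
      · obtain ⟨a, ha⟩ := (hB.1 z h2.1).1
        obtain ⟨b, hb⟩ := (hB.1 w h2.2.1).1
        obtain ⟨c, hc⟩ := (hB.1 q hq).1
        have := ih a ha c hc
        have := hgt c hc b hb
        have := h.1 b hb a ha
        omega
    · exact Or.inr (Or.inr ih)

theorem reach_lt {B : Set Clu} (hB : OrdFam B) {t : ℕ} {q z r : Clu} (hr : r ∈ B)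
    (hqr : cluLT q.1 r.1) (hn : ¬ Relation.ReflTransGen (adjStep B t) q r)
    (h : Relation.ReflTransGen (adjStep B t) q z) : cluLT z.1 r.1 := by
  induction h with
  | refl => exact hqr
  | @tail z w h1 h2 ih =>
    have hwr : w ≠ r := by
      rintro rfl
      exact hn (h1.tail h2)
    rcases hB.2 w h2.2.1 r hr hwr with h | h
    · exact h
    exfalso
    rcases h2.2.2.2 with h' | h'
    · exact h'.2 r hr ⟨ih, h⟩
    · obtain ⟨a, ha⟩ := (hB.1 z h2.1).1
      obtain ⟨b, hb⟩ := (hB.1 w h2.2.1).1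
      obtain ⟨c, hc⟩ := (hB.1 r hr).1
      have := ih a ha c hc
      have := h c hc b hb
      have := h'.1 b hb a ha
      omega

theorem reach_gt {B : Set Clu} (hB : OrdFam B) {t : ℕ} {q z r : Clu} (hr : r ∈ B)
    (hqr : cluLT r.1 q.1) (hn : ¬ Relation.ReflTransGen (adjStep B t) q r)
    (h : Relation.ReflTransGen (adjStep B t) q z) : cluLT r.1 z.1 := by
  induction h with
  | refl => exact hqr
  | @tail z w h1 h2 ih =>
    have hwr : w ≠ r := by
      rintro rfl
      exact hn (h1.tail h2)
    rcases hB.2 w h2.2.1 r hr hwr with h | h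
    swap
    · exact h
    exfalso
    rcases h2.2.2.2 with h' | h'
    swap
    · exact h'.2 r hr ⟨h, ih⟩
    · obtain ⟨a, ha⟩ := (hB.1 z h2.1).1
      obtain ⟨b, hb⟩ := (hB.1 w h2.2.1).1
      obtain ⟨c, hc⟩ := (hB.1 r hr).1
      have := ih c hc a ha
      have := h b hb c hc
      have := h'.1 a ha b hb
      omega

theorem gap_of_adj {B : Set Clu} (hB : OrdFam B) {t : ℕ} {q b : Clu} (h : adjStep B t q b)
    (hlt : cluLT q.1 b.1) : sInf b.1 < sSup q.1 + t := by
  have hne : {d | ∃ a ∈ q.1, ∃ c ∈ b.1, d = Nat.dist a c}.Nonempty := by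
    obtain ⟨a, ha⟩ := (hB.1 q h.1).1
    obtain ⟨c, hc⟩ := (hB.1 b h.2.1).1
    exact ⟨_, a, ha, c, hc, rfl⟩
  obtain ⟨a, ha, c, hc, hd⟩ := Nat.sInf_mem hne
  have h3 := h.2.2.1
  unfold cluDist at h3
  rw [hd, Nat.dist_eq_sub_of_le (hlt a ha c hc).le] at h3
  have h4 := hlt a ha c hc
  have h5 : sInf b.1 ≤ c := Nat.sInf_le hc
  have h6 := le_sSup_clu (hB.1 q h.1).2 ha
  omega

theorem chain_of_finset (Γ : Set ℕ) (M k : ℕ) (Q : ℕ → ℕ → Finset ℕ → Prop) (B : Set Clu)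
    (hB : OrdFam B)
    (hQ : ∀ q ∈ B, k + 1 ≤ q.2 ∧
      ∃ S : Finset ℕ, Q q.2 (sInf q.1) S ∧ (S : Set ℕ) ⊆ Γ ∧ S.sup id = sSup q.1) :
    ∀ (n : ℕ) (F : Finset Clu), F.card = n + 1 → (F : Set Clu) ⊆ B →
      (∀ q ∈ F, (∀ z ∈ F, z = q ∨ cluLT z.1 q.1) ∨ ∃ b ∈ F, cluLT q.1 b.1 ∧
        (∀ r ∈ F, ¬(cluLT q.1 r.1 ∧ cluLT r.1 b.1)) ∧ sInf b.1 < sSup q.1 + M ^ (k + 1)) →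
      ∃ (m : ℕ) (S : Finset ℕ), ∃ q₀ ∈ F, ∃ q₁ ∈ F, (∀ z ∈ F, z = q₀ ∨ cluLT q₀.1 z.1) ∧
        (∀ z ∈ F, z = q₁ ∨ cluLT z.1 q₁.1) ∧ Chain M k Q m (sInf q₀.1) S ∧
        (S : Set ℕ) ⊆ Γ ∧ S.sup id = sSup q₁.1 ∧ m + k * n = ∑ q ∈ F, q.2 := by
  classical
  intro n
  induction n with
  | zero =>
    intro F hF hFB _
    obtain ⟨q, rfl⟩ := Finset.card_eq_one.1 hF
    have hqB : q ∈ B := hFB (by simp)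
    obtain ⟨hm, S, hS, hSΓ, hsup⟩ := hQ q hqB
    exact ⟨q.2, S, q, by simp, q, by simp, by simp, by simp, Chain.base _ _ _ hm hS, hSΓ, hsup,
      by simp⟩
  | succ n ih =>
    intro F hF hFB hG
    have hne : F.Nonempty := Finset.card_pos.1 (by omega)
    obtain ⟨w, hwF, hwmax⟩ := F.exists_max_image (fun q => sSup q.1) hne
    have hw : ∀ z ∈ F, z = w ∨ cluLT z.1 w.1 := by
      intro z hz
      by_cases hzw : z = w
      · exact Or.inl hzw
      right
      rcases hB.2 z (hFB hz) w (hFB hwF) hzw with h | h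
      · exact h
      · exfalso
        have h1 := hwmax z hz
        have h2 := hB.1 z (hFB hz)
        have h3 := hB.1 w (hFB hwF)
        have h4 := h _ (sSup_mem_clu h3.1 h3.2) _ (sSup_mem_clu h2.1 h2.2)
        omega
    have hcard : (F.erase w).card = n + 1 := by
      rw [Finset.card_erase_of_mem hwF]; omega
    have hsubF : ∀ z ∈ F.erase w, z ∈ F := fun z hz => Finset.mem_of_mem_erase hz
    have hlt : ∀ z ∈ F.erase w, cluLT z.1 w.1 := fun z hz =>
      (hw z (hsubF z hz)).resolve_left (Finset.ne_of_mem_erase hz)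
    obtain ⟨m, S, q₀, hq₀, q₁, hq₁, hmin, hmax, hch, hSΓ, hsup, hmass⟩ :=
      ih (F.erase w) hcard (fun z hz => hFB (hsubF z hz)) (by
        intro q hq
        by_cases hqm : ∀ z ∈ F.erase w, z = q ∨ cluLT z.1 q.1
        · exact Or.inl hqm
        right
        push Not at hqm
        obtain ⟨y, hy, hyq, hyl⟩ := hqm
        have hqy : cluLT q.1 y.1 :=
          (hB.2 y (hFB (hsubF y hy)) q (hFB (hsubF q hq)) hyq).resolve_left hyl
        rcases hG q (hsubF q hq) with h | ⟨b, hb, h1, h2, h3⟩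
        · exact absurd ((h y (hsubF y hy)).resolve_left hyq) hyl
        · refine ⟨b, Finset.mem_erase.2 ⟨?_, hb⟩, h1, fun r hr => h2 r (hsubF r hr), h3⟩
          rintro rfl
          exact h2 y (hsubF y hy) ⟨hqy, hlt y hy⟩)
    have hwB := hFB hwF
    obtain ⟨hm₂, S₂, hS₂, hS₂Γ, hsup₂⟩ := hQ w hwB
    have hwfin := hB.1 w hwB
    have hq₁fin := hB.1 q₁ (hFB (hsubF _ hq₁))
    have hgap : sInf w.1 < sSup q₁.1 + M ^ (k + 1) := by
      rcases hG q₁ (hsubF _ hq₁) with h | ⟨b, hb, h1, h2, h3⟩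
      · exfalso
        rcases h w hwF with h | h
        · exact Finset.ne_of_mem_erase hq₁ h.symm
        · exact cluLT_asymm hwfin.1 hq₁fin.1 h (hlt _ hq₁)
      · have : b = w := by
          by_contra hbw
          rcases hmax b (Finset.mem_erase.2 ⟨hbw, hb⟩) with h | h
          · subst h
            exact cluLT_asymm hq₁fin.1 hq₁fin.1 h1 h1
          · exact cluLT_asymm (hB.1 b (hFB hb)).1 hq₁fin.1 h h1
        rwa [this] at h3
    have hl1 : sSup q₁.1 < sInf w.1 :=
      hlt _ hq₁ _ (sSup_mem_clu hq₁fin.1 hq₁fin.2) _ (sInf_mem_clu hwfin.1)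
    have hmge := hch.mass_ge
    refine ⟨m + w.2 - k, S ∪ S₂, q₀, hsubF _ hq₀, w, hwF, ?_, hw, ?_, ?_, ?_, ?_⟩
    · intro z hz
      by_cases hzw : z = w
      · subst hzw
        exact Or.inr (hlt _ hq₀)
      · exact hmin z (Finset.mem_erase.2 ⟨hzw, hz⟩)
    · exact Chain.step m w.2 _ _ (sInf w.1) S S₂ hch hm₂ hS₂ (by rw [hsup]; exact hl1)
        (by rw [hsup]; exact hgap) (by omega)
    · rw [Finset.coe_union]
      exact Set.union_subset hSΓ hS₂Γ
    · rw [Finset.sup_union, hsup, hsup₂]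
      apply sup_eq_right.2
      have := le_sSup_clu hwfin.2 (sInf_mem_clu hwfin.1)
      omega
    · rw [← Finset.add_sum_erase F _ hwF, ← hmass]
      have : k * (n + 1) = k * n + k := by ring
      omega

/-- Description of a genuine (non-junk) cluster. -/
def CluOK (Γ : Set ℕ) (M k : ℕ) (c : Clu) : Prop :=
  c.1.Nonempty ∧ c.1.Finite ∧ c.1 ⊆ Γ ∧
    ∃ S : Finset ℕ, Cert M k c.2 (sInf c.1) S ∧ (S : Set ℕ) ⊆ Γ ∧ S.sup id = sSup c.1

theorem runClu_infinite (Γ : Set ℕ) (h0 : ∀ x ∈ Γ, 1 ≤ x) (k : ℕ) (B : Set Clu) (hB : OrdFam B)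
    (hk : ∀ q ∈ B, k + 1 ≤ q.2) (R : Set Clu) (hR : R ⊆ B) (hinf : R.Infinite) :
    runClu Γ k R = (∅, 0) := by
  have hinj : Set.InjOn (fun q : Clu => sInf q.1) R := by
    intro q hq r hr h
    by_contra hne
    simp only at h
    have h1 := sInf_mem_clu (hB.1 q (hR hq)).1
    have h2 := sInf_mem_clu (hB.1 r (hR hr)).1
    rcases hB.2 q (hR hq) r (hR hr) hne with h' | h'
    · have := h' _ h1 _ h2
      omega
    · have := h' _ h2 _ h1
      omega
  have hU : (⋃ q ∈ R, q.1).Infinite := by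
    refine (hinf.image hinj).mono ?_
    rintro _ ⟨q, hq, rfl⟩
    exact Set.mem_biUnion hq (sInf_mem_clu (hB.1 q (hR hq)).1)
  have hnb : ¬ BddAbove (⋃ q ∈ R, q.1) := fun h => hU (Set.finite_iff_bddAbove.2 h)
  have hsup : sSup (⋃ q ∈ R, q.1) = 0 := by
    rw [csSup_of_not_bddAbove hnb]
    simp
  have hfs : (∑ᶠ q ∈ R, q.2) = 0 := by
    apply finsum_mem_eq_zero_of_infinite
    have : R ∩ Function.support (fun q : Clu => q.2) = R := by
      apply Set.inter_eq_left.2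
      intro q hq
      have := hk q (hR hq)
      simp only [Function.mem_support]
      omega
    rwa [this]
  unfold runClu
  rw [hfs]
  refine Prod.ext ?_ (by simp)
  simp only
  ext a
  simp only [Set.mem_inter_iff, Set.mem_empty_iff_false, iff_false, not_and]
  intro ha haΓ
  have h1 : a ≤ sSup (⋃ q ∈ R, q.1) := ha.2
  have := h0 a haΓ
  omega

/-- Key facts about a finite run. -/
theorem run_finite (Γ : Set ℕ) (M k : ℕ) (B : Set Clu) (hB : OrdFam B)
    (hQ : ∀ q ∈ B, k + 1 ≤ q.2 ∧ CluOK Γ M k q) (p : Clu) (hp : p ∈ B)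
    (hfin : (runOf B (M ^ (k + 1)) p).Finite) :
    ∃ q₀ ∈ runOf B (M ^ (k + 1)) p, ∃ q₁ ∈ runOf B (M ^ (k + 1)) p,
      sInf (⋃ q ∈ runOf B (M ^ (k + 1)) p, q.1) = sInf q₀.1 ∧
      sSup (⋃ q ∈ runOf B (M ^ (k + 1)) p, q.1) = sSup q₁.1 ∧
      (⋃ q ∈ runOf B (M ^ (k + 1)) p, q.1) ⊆ spanI (⋃ q ∈ runOf B (M ^ (k + 1)) p, q.1) ∧
      k + 1 ≤ (runClu Γ k (runOf B (M ^ (k + 1)) p)).2 ∧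
      CluOK Γ M (k + 1) (runClu Γ k (runOf B (M ^ (k + 1)) p)) := by
  classical
  set R := runOf B (M ^ (k + 1)) p with hRdef
  have hRB : R ⊆ B := fun q hq => hq.1
  have hpR : p ∈ R := ⟨hp, .refl⟩
  have hne : hfin.toFinset.Nonempty := ⟨p, by simpa using hpR⟩
  obtain ⟨n, hn⟩ : ∃ n, hfin.toFinset.card = n + 1 :=
    ⟨hfin.toFinset.card - 1, by have := Finset.card_pos.2 hne; omega⟩
  obtain ⟨m, S, q₀, hq₀, q₁, hq₁, hmin, hmax, hch, hSΓ, hsup, hmass⟩ :=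
    chain_of_finset Γ M k (Cert M k) B hB
      (fun q hq => ⟨(hQ q hq).1, (hQ q hq).2.2.2.2⟩) n hfin.toFinset hn
      (by simpa using hRB) (by
        intro q hq
        rw [Set.Finite.mem_toFinset] at hq
        by_cases hsucc : ∃ b, adjStep B (M ^ (k + 1)) q b ∧ cluLT q.1 b.1
        · right
          obtain ⟨b, hb, hlt⟩ := hsucc
          refine ⟨b, ?_, hlt, ?_, gap_of_adj hB hb hlt⟩
          · rw [Set.Finite.mem_toFinset]
            exact ⟨hb.2.1, hq.2.tail hb⟩
          · intro r hr
            rw [Set.Finite.mem_toFinset] at hr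
            rcases hb.2.2.2 with h | h
            · exact h.2 r hr.1
            · exact (cluLT_asymm (hB.1 _ hq.1).1 (hB.1 _ hb.2.1).1 hlt h.1).elim
        · left
          intro z hz
          rw [Set.Finite.mem_toFinset] at hz
          rcases reach_succ hB hq.1 ((reach_symm hq.2).trans hz.2) with h | h | h
          · exact Or.inl h
          · exact Or.inr h
          · exact absurd h hsucc)
  rw [Set.Finite.mem_toFinset] at hq₀ hq₁
  have hq₀f := hB.1 _ hq₀.1
  have hq₁f := hB.1 _ hq₁.1
  have hleast : IsLeast (⋃ q ∈ R, q.1) (sInf q₀.1) := by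
    refine ⟨Set.mem_biUnion hq₀ (sInf_mem_clu hq₀f.1), ?_⟩
    intro a ha
    simp only [Set.mem_iUnion] at ha
    obtain ⟨z, hz, ha⟩ := ha
    rcases hmin z (by simpa using hz) with rfl | h
    · exact Nat.sInf_le ha
    · exact (h _ (sInf_mem_clu hq₀f.1) _ ha).le
  have hgreat : IsGreatest (⋃ q ∈ R, q.1) (sSup q₁.1) := by
    refine ⟨Set.mem_biUnion hq₁ (sSup_mem_clu hq₁f.1 hq₁f.2), ?_⟩
    intro a ha
    simp only [Set.mem_iUnion] at ha
    obtain ⟨z, hz, ha⟩ := ha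
    rcases hmax z (by simpa using hz) with rfl | h
    · exact le_sSup_clu hq₁f.2 ha
    · exact (h _ ha _ (sSup_mem_clu hq₁f.1 hq₁f.2)).le
  have hmassrun : (runClu Γ k R).2 = m := by
    have h1 : (∑ᶠ q ∈ R, q.2) = ∑ q ∈ hfin.toFinset, q.2 := by
      exact finsum_mem_eq_finite_toFinset_sum (fun q : Clu => q.2) hfin
    have h2 : Nat.card R = n + 1 := by
      rw [Nat.card_coe_set_eq, Set.ncard_eq_toFinset_card R hfin, hn]
    change (∑ᶠ q ∈ R, q.2) - k * (Nat.card R - 1) = m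
    rw [h1, h2, ← hmass]
    simp
  have hspan : spanI (⋃ q ∈ R, q.1) = Set.Icc (sInf q₀.1) (sSup q₁.1) := by
    unfold spanI
    rw [hleast.csInf_eq, hgreat.csSup_eq]
  have hset : (runClu Γ k R).1 = Set.Icc (sInf q₀.1) (sSup q₁.1) ∩ Γ := by
    change spanI (⋃ q ∈ R, q.1) ∩ Γ = _
    rw [hspan]
  have hle : sInf q₀.1 ≤ sSup q₁.1 := hgreat.2 hleast.1
  have hl2 : IsLeast (runClu Γ k R).1 (sInf q₀.1) := by
    rw [hset]
    exact ⟨⟨⟨le_rfl, hle⟩, (hQ _ hq₀.1).2.2.2.1 (sInf_mem_clu hq₀f.1)⟩, fun a ha => ha.1.1⟩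
  have hg2 : IsGreatest (runClu Γ k R).1 (sSup q₁.1) := by
    rw [hset]
    exact ⟨⟨⟨hle, le_rfl⟩, (hQ _ hq₁.1).2.2.2.1 (sSup_mem_clu hq₁f.1 hq₁f.2)⟩,
      fun a ha => ha.1.2⟩
  refine ⟨q₀, hq₀, q₁, hq₁, hleast.csInf_eq, hgreat.csSup_eq, ?_, ?_, ?_⟩
  · rw [hspan]
    exact fun a ha => ⟨hleast.2 ha, hgreat.2 ha⟩
  · rw [hmassrun]
    exact hch.mass_ge
  · refine ⟨⟨_, hl2.1⟩, ?_, ?_, S, ?_, hSΓ, ?_⟩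
    · rw [hset]
      exact (Set.finite_Icc _ _).subset Set.inter_subset_left
    · rw [hset]
      exact Set.inter_subset_right
    · rw [hmassrun, hl2.csInf_eq]
      exact Or.inr hch
    · rw [hg2.csSup_eq, hsup]

/-- The inductive invariant. -/
def PartInv (Γ : Set ℕ) (M k : ℕ) : Prop :=
  (∀ c ∈ parts Γ M k, c = (∅, 0) ∨ CluOK Γ M k c) ∧
    ∀ c ∈ parts Γ M k, ∀ d ∈ parts Γ M k, c.1.Nonempty → d.1.Nonempty → c ≠ d →
      cluLT c.1 d.1 ∨ cluLT d.1 c.1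

theorem PartInv.fam {Γ : Set ℕ} {M k : ℕ} (h : PartInv Γ M k) :
    OrdFam {q ∈ parts Γ M k | k + 1 ≤ q.2} ∧
      ∀ q ∈ {q ∈ parts Γ M k | k + 1 ≤ q.2}, k + 1 ≤ q.2 ∧ CluOK Γ M k q := by
  have h2 : ∀ q ∈ {q ∈ parts Γ M k | k + 1 ≤ q.2}, k + 1 ≤ q.2 ∧ CluOK Γ M k q := by
    rintro q ⟨hq, hk⟩
    refine ⟨hk, (h.1 q hq).resolve_left ?_⟩
    rintro rfl
    simp at hk
  refine ⟨⟨fun q hq => ⟨(h2 q hq).2.1, (h2 q hq).2.2.1⟩, ?_⟩, h2⟩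
  intro q hq r hr hne
  exact h.2 q hq.1 r hr.1 (h2 q hq).2.1 (h2 r hr).2.1 hne

/-- A cluster of `𝐂_{k+1}` is junk, old, or comes from a finite run. -/
theorem next_cases {Γ : Set ℕ} (h0 : ∀ x ∈ Γ, 1 ≤ x) {M k : ℕ} (h : PartInv Γ M k) {c : Clu}
    (hc : c ∈ parts Γ M (k + 1)) :
    c = (∅, 0) ∨
    (c ∈ parts Γ M k ∧ ∀ R, IsRun {q ∈ parts Γ M k | k + 1 ≤ q.2} (M ^ (k + 1)) R →
      Disjoint c.1 (spanI (⋃ q ∈ R, q.1))) ∨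
    ∃ p ∈ {q ∈ parts Γ M k | k + 1 ≤ q.2},
      IsRun {q ∈ parts Γ M k | k + 1 ≤ q.2} (M ^ (k + 1))
        (runOf {q ∈ parts Γ M k | k + 1 ≤ q.2} (M ^ (k + 1)) p) ∧
      (runOf {q ∈ parts Γ M k | k + 1 ≤ q.2} (M ^ (k + 1)) p).Finite ∧
      c = runClu Γ k (runOf {q ∈ parts Γ M k | k + 1 ≤ q.2} (M ^ (k + 1)) p) := by
  rcases hc with ⟨R, hR, rfl⟩ | hc
  · obtain ⟨p, hp, rfl, hq⟩ := id hR
    by_cases hfin : (runOf {q ∈ parts Γ M k | k + 1 ≤ q.2} (M ^ (k + 1)) p).Finite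
    · exact Or.inr (Or.inr ⟨p, hp, hR, hfin, rfl⟩)
    · left
      exact runClu_infinite Γ h0 k _ h.fam.1 (fun q hq => hq.2) _ (fun q hq => hq.1) hfin
  · exact Or.inr (Or.inl hc)

theorem old_run_order {Γ : Set ℕ} {M k : ℕ} (h : PartInv Γ M k) {c p : Clu}
    (hc : c ∈ parts Γ M k) (hcn : c.1.Nonempty)
    (hp : p ∈ {q ∈ parts Γ M k | k + 1 ≤ q.2})
    (hfin : (runOf {q ∈ parts Γ M k | k + 1 ≤ q.2} (M ^ (k + 1)) p).Finite)
    (hd : Disjoint c.1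
      (spanI (⋃ q ∈ runOf {q ∈ parts Γ M k | k + 1 ≤ q.2} (M ^ (k + 1)) p, q.1))) :
    cluLT c.1 (runClu Γ k (runOf {q ∈ parts Γ M k | k + 1 ≤ q.2} (M ^ (k + 1)) p)).1 ∨
    cluLT (runClu Γ k (runOf {q ∈ parts Γ M k | k + 1 ≤ q.2} (M ^ (k + 1)) p)).1 c.1 := by
  obtain ⟨q₀, hq₀, q₁, hq₁, hi, hs, hsub, -, -⟩ := run_finite Γ M k _ h.fam.1 h.fam.2 p hp hfin
  have hq₀n := (h.fam.1.1 q₀ hq₀.1).1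
  have hne : c ≠ q₀ := by
    rintro rfl
    exact Set.disjoint_left.1 hd (sInf_mem_clu hcn)
      (hsub (Set.mem_biUnion hq₀ (sInf_mem_clu hcn)))
  rcases h.2 c hc q₀ hq₀.1.1 hcn hq₀n hne with hlt | hlt
  · left
    intro a ha b hb
    have h1 := hlt a ha _ (sInf_mem_clu hq₀n)
    have h2 : sInf (⋃ q ∈ runOf {q ∈ parts Γ M k | k + 1 ≤ q.2} (M ^ (k + 1)) p, q.1) ≤ b :=
      hb.1.1
    omega
  · right
    intro b hb a ha
    have h1 := hlt _ (sInf_mem_clu hq₀n) a ha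
    have h2 : b ≤ sSup (⋃ q ∈ runOf {q ∈ parts Γ M k | k + 1 ≤ q.2} (M ^ (k + 1)) p, q.1) :=
      hb.1.2
    by_contra hcon
    exact Set.disjoint_left.1 hd ha ⟨by omega, by omega⟩

theorem run_run_lt {Γ : Set ℕ} {M k : ℕ} (h : PartInv Γ M k) {p p' : Clu}
    (hp : p ∈ {q ∈ parts Γ M k | k + 1 ≤ q.2}) (hp' : p' ∈ {q ∈ parts Γ M k | k + 1 ≤ q.2})
    (hfin : (runOf {q ∈ parts Γ M k | k + 1 ≤ q.2} (M ^ (k + 1)) p).Finite)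
    (hfin' : (runOf {q ∈ parts Γ M k | k + 1 ≤ q.2} (M ^ (k + 1)) p').Finite)
    (hn : ¬ Relation.ReflTransGen (adjStep {q ∈ parts Γ M k | k + 1 ≤ q.2} (M ^ (k + 1))) p p')
    (hlt : cluLT p.1 p'.1) :
    cluLT (runClu Γ k (runOf {q ∈ parts Γ M k | k + 1 ≤ q.2} (M ^ (k + 1)) p)).1
      (runClu Γ k (runOf {q ∈ parts Γ M k | k + 1 ≤ q.2} (M ^ (k + 1)) p')).1 := by
  obtain ⟨-, -, q₁, hq₁, -, hs, -⟩ := run_finite Γ M k _ h.fam.1 h.fam.2 p hp hfin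
  obtain ⟨q₀, hq₀, -, -, hi, -⟩ := run_finite Γ M k _ h.fam.1 h.fam.2 p' hp' hfin'
  have h1 : cluLT q₁.1 p'.1 := reach_lt h.fam.1 hp' hlt hn hq₁.2
  have h2 : cluLT q₁.1 q₀.1 :=
    reach_gt h.fam.1 hq₁.1 h1 (fun hh => hn (hq₁.2.trans (reach_symm hh))) hq₀.2
  have hf := h.fam.1.1 q₁ hq₁.1
  have hf' := h.fam.1.1 q₀ hq₀.1
  intro a ha b hb
  have h3 := h2 _ (sSup_mem_clu hf.1 hf.2) _ (sInf_mem_clu hf'.1)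
  have h4 : a ≤ sSup (⋃ q ∈ runOf {q ∈ parts Γ M k | k + 1 ≤ q.2} (M ^ (k + 1)) p, q.1) :=
    ha.1.2
  have h5 : sInf (⋃ q ∈ runOf {q ∈ parts Γ M k | k + 1 ≤ q.2} (M ^ (k + 1)) p', q.1) ≤ b :=
    hb.1.1
  omega

theorem runOf_eq {B : Set Clu} {t : ℕ} {p p' : Clu}
    (h : Relation.ReflTransGen (adjStep B t) p p') : runOf B t p = runOf B t p' := by
  ext q
  constructor
  · rintro ⟨hq, h1⟩
    exact ⟨hq, (reach_symm h).trans h1⟩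
  · rintro ⟨hq, h1⟩
    exact ⟨hq, h.trans h1⟩

theorem partInv (Γ : Set ℕ) (h0 : ∀ x ∈ Γ, 1 ≤ x) (M k : ℕ) : PartInv Γ M k := by
  induction k with
  | zero =>
    constructor
    · rintro c ⟨x, hx, rfl⟩
      right
      refine ⟨by simp, by simp, by simpa using hx, {x}, ⟨rfl, by simp⟩, by simpa using hx,
        by simp⟩
    · rintro c ⟨x, hx, rfl⟩ d ⟨y, hy, rfl⟩ - - hne
      have hxy : x ≠ y := by
        rintro rfl
        exact hne rfl
      rcases lt_or_gt_of_ne hxy with h | h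
      · left
        rintro a rfl b rfl
        exact h
      · right
        rintro a rfl b rfl
        exact h
  | succ k ih =>
    constructor
    · intro c hc
      rcases next_cases h0 ih hc with h | h | ⟨p, hp, hrun, hfin, rfl⟩
      · exact Or.inl h
      · rcases ih.1 c h.1 with h | ⟨h1, h2, h3, S, h4, h5, h6⟩
        · exact Or.inl h
        · exact Or.inr ⟨h1, h2, h3, S, Or.inl h4, h5, h6⟩
      · right
        obtain ⟨-, -, -, -, -, -, -, -, h⟩ := run_finite Γ M k _ ih.fam.1 ih.fam.2 p hp hfin
        exact h
    · intro c hc d hd hcn hdn hne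
      rcases next_cases h0 ih hc with rfl | h | ⟨p, hp, hrun, hfin, rfl⟩
      · simp at hcn
      · rcases next_cases h0 ih hd with rfl | h' | ⟨p', hp', hrun', hfin', rfl⟩
        · simp at hdn
        · exact ih.2 c h.1 d h'.1 hcn hdn hne
        · exact old_run_order ih h.1 hcn hp' hfin' (h.2 _ hrun')
      · rcases next_cases h0 ih hd with rfl | h' | ⟨p', hp', hrun', hfin', rfl⟩
        · simp at hdn
        · exact (old_run_order ih h'.1 hdn hp hfin (h'.2 _ hrun)).symm
        · have hn : ¬ Relation.ReflTransGen
              (adjStep {q ∈ parts Γ M k | k + 1 ≤ q.2} (M ^ (k + 1))) p p' := by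
            intro hr
            exact hne (by rw [runOf_eq hr])
          have hpp : p ≠ p' := by
            rintro rfl
            exact hn .refl
          rcases ih.fam.1.2 p hp p' hp' hpp with hlt | hlt
          · exact Or.inl (run_run_lt ih hp hp' hfin hfin' hn hlt)
          · exact Or.inr (run_run_lt ih hp' hp hfin' hfin (fun hr => hn (reach_symm hr)) hlt)

theorem Gamma_pos (ξ : ℕ → Bool) : ∀ x ∈ Gamma ξ, 1 ≤ x := fun _ hx => hx.1

theorem level_mass (Γ : Set ℕ) (h0 : ∀ x ∈ Γ, 1 ≤ x) (M ℓ : ℕ) (c : Clu)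
    (h : IsLevelCluster Γ M ℓ c) (hn : c.1.Nonempty) : ℓ ≤ c.2 := by
  cases ℓ with
  | zero => omega
  | succ k =>
    rcases next_cases h0 (partInv Γ h0 M k) h.1 with rfl | h' | ⟨p, hp, -, hfin, rfl⟩
    · simp at hn
    · exact absurd h'.1 (h.2 k (by omega))
    · have ih := partInv Γ h0 M k
      obtain ⟨-, -, -, -, -, -, -, h, -⟩ := run_finite Γ M k _ ih.fam.1 ih.fam.2 p hp hfin
      exact h

theorem hasCert_of_mem (ξ : ℕ → Bool) (M k : ℕ) (c : Clu) (hc : c ∈ parts (Gamma ξ) M k)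
    (hne : c ≠ (∅, 0)) : HasCert M c.2 (sInf c.1) ξ k := by
  obtain ⟨-, -, -, S, h1, h2, -⟩ :=
    ((partInv (Gamma ξ) (Gamma_pos ξ) M k).1 c hc).resolve_left hne
  exact ⟨S, h1, h2⟩

theorem chi_of_not_bad (M : ℕ) (ξ : ℕ → Bool) (k : ℕ) (h : ∀ m, k < m → ξ ∉ Bad M m) :
    ChiCond (Gamma ξ) M k := by
  rintro c ⟨ℓ, hℓ⟩ hk
  by_contra hcon
  refine h c.2 hk ⟨sInf c.1, by omega, ℓ, hasCert_of_mem ξ M ℓ c (hℓ ℓ le_rfl) ?_⟩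
  rintro rfl
  simp at hk

theorem good_of_not_bad (M : ℕ) (hM : 3 ≤ M) (ξ : ℕ → Bool) (k : ℕ)
    (h : ∀ m, k < m → ξ ∉ Bad M m) : GoodSeq M ξ := by
  intro x _
  refine ⟨max k x, ?_⟩
  rintro ℓ ⟨c, hc, hxc⟩
  by_contra hcon
  have h1 := level_mass _ (Gamma_pos ξ) M ℓ c hc ⟨x, hxc⟩
  have h2 : sInf c.1 ≤ x := Nat.sInf_le hxc
  have h3 : c.2 < M ^ c.2 := Nat.lt_pow_self (by omega)
  refine h c.2 (by omega) ⟨sInf c.1, by omega, ℓ, hasCert_of_mem ξ M ℓ c hc.1 ?_⟩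
  rintro rfl
  simp at hxc

theorem statement_15 (M : ℕ) (hM : 3 ≤ M) (p : ℝ) (hp0 : 0 < p)
    (hp : p < 1 / (64 * (M : ℝ) ^ 2))
    (μ : Measure (ℕ → Bool)) (hμ : IsBernoulliProduct μ p) :
    μ {ξ | GoodSeq M ξ ∧ ∃ k, ChiCond (Gamma ξ) M k} = 1 ∧
    0 < μ {ξ | GoodSeq M ξ ∧ ChiCond (Gamma ξ) M 0} := by
  haveI := hμ.1
  have hbad := meas_bad M hM p hp0 hp μ hμ
  have hsummable : Summable fun m : ℕ => ((1 : ℝ) / 16) ^ m / 3 :=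
    (summable_geometric_of_lt_one (by norm_num) (by norm_num)).div_const 3
  constructor
  · have hsum : ∑' m, μ (Bad M m) ≠ ⊤ := by
      refine ne_top_of_le_ne_top ?_ (ENNReal.tsum_le_tsum hbad)
      rw [← ENNReal.ofReal_tsum_of_nonneg (fun m => by positivity) hsummable]
      exact ENNReal.ofReal_ne_top
    have hae := ae_eventually_notMem hsum
    have : {ξ | GoodSeq M ξ ∧ ∃ k, ChiCond (Gamma ξ) M k} =ᵐ[μ] Set.univ := by
      rw [Filter.eventuallyEq_univ]
      filter_upwards [hae] with ξ hξ
      obtain ⟨k, hk⟩ := Filter.eventually_atTop.1 hξ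
      have hk' : ∀ m, k < m → ξ ∉ Bad M m := fun m hm => hk m hm.le
      exact ⟨good_of_not_bad M hM ξ k hk', k, chi_of_not_bad M ξ k hk'⟩
    rw [measure_congr this, measure_univ]
  · rw [pos_iff_ne_zero]
    intro hzero
    have hcov : (Set.univ : Set (ℕ → Bool)) ⊆
        {ξ | GoodSeq M ξ ∧ ChiCond (Gamma ξ) M 0} ∪ ⋃ m, Bad M (m + 1) := by
      intro ξ _
      by_cases hξ : ξ ∈ ⋃ m, Bad M (m + 1)
      · exact Or.inr hξ
      · left
        have hk' : ∀ m, 0 < m → ξ ∉ Bad M m := by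
          intro m hm hb
          refine hξ (Set.mem_iUnion.2 ⟨m - 1, ?_⟩)
          rwa [Nat.sub_add_cancel hm]
        exact ⟨good_of_not_bad M hM ξ 0 hk', chi_of_not_bad M ξ 0 hk'⟩
    have h1 := (measure_mono (μ := μ) hcov).trans (measure_union_le _ _)
    rw [hzero, zero_add, measure_univ] at h1
    have h2 : μ (⋃ m, Bad M (m + 1)) ≤ ENNReal.ofReal (1 / 2) := by
      refine (measure_iUnion_le _).trans ((ENNReal.tsum_le_tsum fun m => hbad (m + 1)).trans ?_)
      rw [← ENNReal.ofReal_tsum_of_nonneg (fun m => by positivity)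
        ((summable_nat_add_iff 1).2 hsummable)]
      apply ENNReal.ofReal_le_ofReal
      have : ∀ m : ℕ, ((1 : ℝ) / 16) ^ (m + 1) / 3 = (1 / 48) * (1 / 16) ^ m := by
        intro m
        ring
      simp_rw [this]
      rw [tsum_mul_left, tsum_geometric_of_lt_one (by norm_num) (by norm_num)]
      norm_num
    have h3 : ENNReal.ofReal (1 / 2) < 1 := by
      rw [← ENNReal.ofReal_one]
      exact (ENNReal.ofReal_lt_ofReal_iff (by norm_num)).2 (by norm_num)
    exact absurd (h1.trans h2) (not_le.2 h3)

end Paper
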